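/- Let K be an n×n real matrix with nonnegative off-diagonal entries and zero column sums (i.e., k_{ii} = -∑_{m≠i} k_{mi}). Then for every eigenvalue λ of K with λ ≠ 0, one has |Im λ| ≤ cot(π/n) · |Re λ|. -/

import Mathlib

open Real Matrix

/-!
Let `v` be a left eigenvector of `K` for `λ`, let `θ = π / n` and `ω = exp (-θ i)`; it is enough to
show that `Re (ω λ) ≤ 0` and to apply this to `λ` and to its conjugate. Suppose `Re (ω λ) > 0`. In
`λ = ∑ j, K j i * (v j / v i)` the coefficients are nonnegative off the diagonal and have
nonpositive sum, so each `i` in the support of `v` has a successor `j` with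
`Re (ω v j / v i) > Re ω`: the ratio lies strictly beyond the line through `1` and `exp (2 θ i)`,
a side of the regular `n`-gon. Following successors produces cycles, along which the ratios
multiply to `1`. But the AM-GM inequality and the concavity of the cosine on `[-π/2, π/2]` show
that at most `n` points beyond that side never have product `1`.
-/

section MeanArgument

variable {ι : Type*} {s : Finset ι} {w : ι → ℝ} {u : ι → ℂ} {c θ : ℝ}

lemma prod_cos_rpow_le_cos_sum {y : ι → ℝ} (hw : ∀ i ∈ s, 0 ≤ w i) (hw1 : ∑ i ∈ s, w i = 1)
    (hy : ∀ i ∈ s, y i ∈ Set.Icc (-(π / 2)) (π / 2)) :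
    ∏ i ∈ s, cos (y i) ^ w i ≤ cos (∑ i ∈ s, w i * y i) :=
  (geom_mean_le_arith_mean_weighted s w _ hw hw1 fun i hi => cos_nonneg_of_mem_Icc (hy i hi)).trans
    (strictConcaveOn_cos_Icc.concaveOn.le_map_sum hw hw1 hy)

lemma le_cos_sum_mul_arg (hc : 0 < c) (hw : ∀ i ∈ s, 0 ≤ w i) (hw1 : ∑ i ∈ s, w i = 1)
    (hu : ∀ i ∈ s, c ≤ (u i).re) (hnorm : ∏ i ∈ s, ‖u i‖ ^ w i ≤ 1) :
    c ≤ cos (∑ i ∈ s, w i * (u i).arg) := by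
  have harg : ∀ i ∈ s, (u i).arg ∈ Set.Icc (-(π / 2)) (π / 2) := fun i hi =>
    abs_le.1 (Complex.abs_arg_le_pi_div_two_iff.2 (hc.le.trans (hu i hi)))
  have hcos : ∀ i ∈ s, 0 ≤ cos (u i).arg := fun i hi => cos_nonneg_of_mem_Icc (harg i hi)
  calc c = ∏ i ∈ s, c ^ w i := by rw [← rpow_sum_of_pos hc, hw1, rpow_one]
    _ ≤ ∏ i ∈ s, (u i).re ^ w i := Finset.prod_le_prod (fun i _ => rpow_nonneg hc.le _)
        fun i hi => rpow_le_rpow hc.le (hu i hi) (hw i hi)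
    _ = (∏ i ∈ s, ‖u i‖ ^ w i) * ∏ i ∈ s, cos (u i).arg ^ w i := by
        rw [← Finset.prod_mul_distrib]
        refine Finset.prod_congr rfl fun i hi => ?_
        rw [← mul_rpow (norm_nonneg _) (hcos i hi), Complex.norm_mul_cos_arg]
    _ ≤ ∏ i ∈ s, cos (u i).arg ^ w i :=
        mul_le_of_le_one_left (Finset.prod_nonneg fun i hi => rpow_nonneg (hcos i hi) _) hnorm
    _ ≤ cos (∑ i ∈ s, w i * (u i).arg) := prod_cos_rpow_le_cos_sum hw hw1 harg

lemma abs_lt_of_cos_lt_cos {x : ℝ} (hθ : 0 ≤ θ) (hx : |x| ≤ π) (h : cos θ < cos x) : |x| < θ := by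
  contrapose! h
  rw [← cos_abs x]
  exact cos_le_cos_of_nonneg_of_le_pi hθ hx h

lemma abs_sum_arg_lt_card_mul (hs : s.Nonempty) (hθ0 : 0 ≤ θ) (hθ : θ ≤ π / 2)
    (hu : ∀ i ∈ s, cos θ < (u i).re) (hnorm : ∏ i ∈ s, ‖u i‖ = 1) :
    |∑ i ∈ s, (u i).arg| < s.card * θ := by
  have hcard : (0 : ℝ) < s.card := by exact_mod_cast hs.card_pos
  obtain ⟨i₀, hi₀, hmin⟩ := s.exists_min_image (fun i => (u i).re) hs
  have hpos : 0 < (u i₀).re :=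
    (cos_nonneg_of_neg_pi_div_two_le_of_le (by linarith) hθ).trans_lt (hu i₀ hi₀)
  have hcos : cos θ < cos ((s.card : ℝ)⁻¹ * ∑ i ∈ s, (u i).arg) := by
    rw [Finset.mul_sum]
    refine (hu i₀ hi₀).trans_le
      (le_cos_sum_mul_arg hpos (fun _ _ => by positivity) ?_ hmin ?_)
    · rw [Finset.sum_const, nsmul_eq_mul, mul_inv_cancel₀ hcard.ne']
    · rw [finsetProd_rpow s _ (fun i _ => norm_nonneg _), hnorm, one_rpow]
  have hmean : |(s.card : ℝ)⁻¹ * ∑ i ∈ s, (u i).arg| ≤ π := by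
    rw [abs_mul, abs_of_pos (inv_pos.2 hcard), inv_mul_le_iff₀ hcard, ← nsmul_eq_mul]
    exact (s.abs_sum_le_sum_abs _).trans
      (s.sum_le_card_nsmul _ _ fun i _ => Complex.abs_arg_le_pi _)
  have hlt := abs_lt_of_cos_lt_cos hθ0 hmean hcos
  rwa [abs_mul, abs_of_pos (inv_pos.2 hcard), inv_mul_lt_iff₀ hcard] at hlt

lemma prod_norm_mul_exp_sum_arg (s : Finset ι) (u : ι → ℂ) :
    ((∏ i ∈ s, ‖u i‖ : ℝ) : ℂ) * Complex.exp ((∑ i ∈ s, (u i).arg : ℝ) * Complex.I)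
      = ∏ i ∈ s, u i := by
  rw [Complex.ofReal_sum, Finset.sum_mul, Complex.exp_sum, Complex.ofReal_prod,
    ← Finset.prod_mul_distrib]
  exact Finset.prod_congr rfl fun i _ => Complex.norm_mul_exp_arg_mul_I _

lemma prod_ne_exp_pow_card (hs : s.Nonempty) (hθ0 : 0 ≤ θ) (hθ : θ ≤ π / 2)
    (hcard : s.card * θ ≤ π) (hu : ∀ i ∈ s, cos θ < (u i).re) :
    ∏ i ∈ s, u i ≠ Complex.exp ((-θ : ℝ) * Complex.I) ^ s.card := by
  intro hprod
  have hnorm : ∏ i ∈ s, ‖u i‖ = 1 := by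
    rw [← norm_prod, hprod, norm_pow, Complex.norm_exp_ofReal_mul_I, one_pow]
  have hexp : Complex.exp ((∑ i ∈ s, (u i).arg : ℝ) * Complex.I)
      = Complex.exp (s.card * ((-θ : ℝ) * Complex.I)) := by
    rw [Complex.exp_nat_mul, ← hprod, ← prod_norm_mul_exp_sum_arg, hnorm, Complex.ofReal_one,
      one_mul]
  obtain ⟨k, hk⟩ := Complex.exp_eq_exp_iff_exists_int.1 hexp
  have hsum : ∑ i ∈ s, (u i).arg = -(s.card * θ) + k * (2 * π) := by
    simpa using congrArg Complex.im hk
  obtain ⟨hlower, hupper⟩ := abs_lt.1 (abs_sum_arg_lt_card_mul hs hθ0 hθ hu hnorm)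
  have hk_pos : (0 : ℝ) < k := by
    by_contra! hk_nonpos
    nlinarith [pi_pos]
  have hk_one : (1 : ℝ) ≤ k := by exact_mod_cast Int.cast_pos.1 hk_pos
  nlinarith [pi_pos]

end MeanArgument

section FiniteDynamics

variable {α : Type*}

lemma periodicPts_nonempty [Finite α] [Nonempty α] (f : α → α) :
    (Function.periodicPts f).Nonempty := by
  obtain ⟨x⟩ := ‹Nonempty α›
  obtain ⟨a, b, hab, heq⟩ := Set.finite_univ.exists_lt_map_eq_of_forall_mem
    fun k : ℕ => Set.mem_univ (f^[k] x)
  refine ⟨f^[a] x, Function.mk_mem_periodicPts (Nat.sub_pos_of_lt hab) ?_⟩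
  rw [Function.IsPeriodicPt, Function.IsFixedPt, ← Function.iterate_add_apply,
    Nat.sub_add_cancel hab.le, heq]

lemma exists_finset_bijOn_self [Finite α] [Nonempty α] (f : α → α) :
    ∃ s : Finset α, s.Nonempty ∧ Set.BijOn f s s := by
  refine ⟨(Set.toFinite (Function.periodicPts f)).toFinset, ?_, ?_⟩
  · simpa only [Set.Finite.toFinset_nonempty] using periodicPts_nonempty f
  · simpa only [Set.Finite.coe_toFinset] using Function.bijOn_periodicPts f

lemma prod_comp_div_eq_one_of_bijOn {M : Type*} [CommGroupWithZero M] {s : Finset α} {f : α → α}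
    (hf : Set.BijOn f s s) {g : α → M} (hg : ∀ a ∈ s, g a ≠ 0) :
    ∏ a ∈ s, g (f a) / g a = 1 := by
  rw [Finset.prod_div_distrib,
    Finset.prod_nbij f hf.mapsTo hf.injOn hf.surjOn fun _ _ => rfl,
    div_self (Finset.prod_ne_zero_iff.2 hg)]

end FiniteDynamics

section LeftEigenvector

variable {ι : Type*} [Fintype ι]

lemma mem_spectrum_iff_exists_vecMul_eq_smul {F : Type*} [Field F] [DecidableEq ι]
    {A : Matrix ι ι F} {μ : F} : μ ∈ spectrum F A ↔ ∃ v ≠ 0, v ᵥ* A = μ • v := by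
  rw [spectrum.mem_iff, isUnit_iff_isUnit_det, isUnit_iff_ne_zero, not_not,
    ← exists_vecMul_eq_zero_iff]
  simp only [vecMul_sub, sub_eq_zero, Algebra.algebraMap_eq_smul_one, vecMul_smul, vecMul_one,
    eq_comm]

variable {K : Matrix ι ι ℝ} {lam : ℂ} {v : ι → ℂ}

lemma star_vecMul_map_algebraMap_eq_smul (hv : v ᵥ* K.map (algebraMap ℝ ℂ) = lam • v) :
    star v ᵥ* K.map (algebraMap ℝ ℂ) = star lam • star v := by
  rw [← star_smul, ← hv]
  ext i
  simp [vecMul, dotProduct]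

lemma exists_re_lt_re_mul_div (hoff : ∀ i j, i ≠ j → 0 ≤ K i j) (hcol : ∀ j, ∑ i, K i j ≤ 0)
    (hv : v ᵥ* K.map (algebraMap ℝ ℂ) = lam • v) {ω : ℂ} (hω : 0 ≤ ω.re)
    (hlam : 0 < (ω * lam).re) {i : ι} (hi : v i ≠ 0) :
    ∃ j, ω.re < (ω * (v j / v i)).re := by
  by_contra! hle
  have hsum : ω * lam = ∑ j, (K j i : ℂ) * (ω * (v j / v i)) := by
    have hvi : ∑ j, v j * K j i = lam * v i := congrFun hv i
    rw [eq_div_of_mul_eq hi hvi.symm, Finset.sum_div, Finset.mul_sum]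
    exact Finset.sum_congr rfl fun j _ => by ring
  have hterm : ∀ j, K j i * (ω * (v j / v i)).re ≤ K j i * ω.re := fun j => by
    rcases eq_or_ne j i with rfl | hji
    · rw [div_self hi, mul_one]
    · exact mul_le_mul_of_nonneg_left (hle j) (hoff j i hji)
  refine hlam.not_ge ?_
  calc (ω * lam).re = ∑ j, K j i * (ω * (v j / v i)).re := by
        simp only [hsum, Complex.re_sum, Complex.re_ofReal_mul]
    _ ≤ ∑ j, K j i * ω.re := Finset.sum_le_sum fun j _ => hterm j
    _ = (∑ j, K j i) * ω.re := (Finset.sum_mul ..).symm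
    _ ≤ 0 := mul_nonpos_of_nonpos_of_nonneg (hcol i) hω

lemma pi_div_card_le_pi_div_two (ι : Type*) [Fintype ι] [Nontrivial ι] :
    π / Fintype.card ι ≤ π / 2 := by
  have hcard : (2 : ℝ) ≤ Fintype.card ι := by exact_mod_cast Fintype.one_lt_card
  gcongr

lemma re_exp_mul_nonpos [Nontrivial ι] (hoff : ∀ i j, i ≠ j → 0 ≤ K i j)
    (hcol : ∀ j, ∑ i, K i j ≤ 0) (hv0 : v ≠ 0) (hv : v ᵥ* K.map (algebraMap ℝ ℂ) = lam • v) :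
    (Complex.exp ((-(π / Fintype.card ι) : ℝ) * Complex.I) * lam).re ≤ 0 := by
  set θ := π / Fintype.card ι
  set ω := Complex.exp ((-θ : ℝ) * Complex.I)
  by_contra! hlam
  have hθ0 : 0 ≤ θ := by positivity
  have hθ : θ ≤ π / 2 := pi_div_card_le_pi_div_two ι
  have hωre : ω.re = cos θ := by rw [Complex.exp_ofReal_mul_I_re, cos_neg]
  have hω : 0 ≤ ω.re := hωre ▸ cos_nonneg_of_neg_pi_div_two_le_of_le (by linarith) hθ
  have hsucc (i : {i // v i ≠ 0}) : ∃ j : {i // v i ≠ 0}, ω.re < (ω * (v j / v i)).re := by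
    obtain ⟨j, hj⟩ := exists_re_lt_re_mul_div hoff hcol hv hω hlam i.2
    refine ⟨⟨j, fun hvj => hω.not_gt ?_⟩, hj⟩
    simpa only [hvj, zero_div, mul_zero, Complex.zero_re] using hj
  choose f hf using hsucc
  obtain ⟨i₀, hi₀⟩ := Function.ne_iff.1 hv0
  have : Nonempty {i // v i ≠ 0} := ⟨⟨i₀, hi₀⟩⟩
  obtain ⟨s, hs, hbij⟩ := exists_finset_bijOn_self f
  have hcard : s.card * θ ≤ π := by
    have hle : s.card ≤ Fintype.card ι := s.card_le_univ.trans (Fintype.card_subtype_le _)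
    have hmul : Fintype.card ι * θ = π := mul_div_cancel₀ π (by simp)
    rw [← hmul]
    gcongr
  refine prod_ne_exp_pow_card hs hθ0 hθ hcard (u := fun i => ω * (v (f i) / v i))
    (fun i _ => hωre ▸ hf i) ?_
  rw [Finset.prod_mul_distrib, Finset.prod_const,
    prod_comp_div_eq_one_of_bijOn hbij (g := fun i => v i) fun i _ => i.2, mul_one]

lemma im_le_cot_mul_neg_re [Nontrivial ι] (hoff : ∀ i j, i ≠ j → 0 ≤ K i j)
    (hcol : ∀ j, ∑ i, K i j ≤ 0) (hv0 : v ≠ 0) (hv : v ᵥ* K.map (algebraMap ℝ ℂ) = lam • v) :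
    lam.im ≤ Real.cot (π / Fintype.card ι) * -lam.re := by
  have hsin : 0 < sin (π / Fintype.card ι) :=
    sin_pos_of_pos_of_lt_pi (by positivity)
      ((pi_div_card_le_pi_div_two ι).trans_lt (by linarith [pi_pos]))
  have hre := re_exp_mul_nonpos hoff hcol hv0 hv
  rw [Complex.mul_re, Complex.exp_ofReal_mul_I_re, Complex.exp_ofReal_mul_I_im, cos_neg,
    sin_neg] at hre
  rw [Real.cot_eq_cos_div_sin, div_mul_eq_mul_div, le_div_iff₀ hsin]
  linarith

end LeftEigenvector

theorem metzler_zero_colsum_eigenvalue_tilt_bound_general {ι : Type*} [Fintype ι] [DecidableEq ι]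
    [Nontrivial ι] {K : Matrix ι ι ℝ} (hoff : ∀ i j, i ≠ j → 0 ≤ K i j)
    (hcol : ∀ j, ∑ i, K i j ≤ 0) {lam : ℂ}
    (hlam : lam ∈ spectrum ℂ (K.map (algebraMap ℝ ℂ))) :
    |lam.im| ≤ Real.cot (π / Fintype.card ι) * |lam.re| := by
  obtain ⟨v, hv0, hv⟩ := mem_spectrum_iff_exists_vecMul_eq_smul.1 hlam
  have him : lam.im ≤ Real.cot (π / Fintype.card ι) * -lam.re :=
    im_le_cot_mul_neg_re hoff hcol hv0 hv
  have him_conj : -lam.im ≤ Real.cot (π / Fintype.card ι) * -lam.re :=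
    im_le_cot_mul_neg_re hoff hcol (star_ne_zero.2 hv0) (star_vecMul_map_algebraMap_eq_smul hv)
  have hcot : 0 ≤ Real.cot (π / Fintype.card ι) := by
    rw [← Real.tan_inv_eq_cot]
    exact inv_nonneg.2 (tan_nonneg_of_nonneg_of_le_pi_div_two (by positivity)
      (pi_div_card_le_pi_div_two ι))
  exact (abs_le'.2 ⟨him, him_conj⟩).trans (mul_le_mul_of_nonneg_left (neg_le_abs _) hcot)

theorem metzler_zero_colsum_eigenvalue_tilt_bound
    (n : ℕ) (hn : 2 ≤ n) (K : Matrix (Fin n) (Fin n) ℝ)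
    (hoff : ∀ i j, i ≠ j → 0 ≤ K i j)
    (hcol : ∀ j, ∑ i, K i j = 0)
    (lam : ℂ)
    (hlam : lam ∈ spectrum ℂ (K.map (algebraMap ℝ ℂ)))
    (hne : lam ≠ 0) :
    |lam.im| ≤ Real.cot (Real.pi / n) * |lam.re| := by
  have : Nontrivial (Fin n) := Fin.nontrivial_iff_two_le.2 hn
  simpa using metzler_zero_colsum_eigenvalue_tilt_bound_general hoff (fun j => (hcol j).le) hlam
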